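/- If G is a 1-walk regular graph on n vertices, then ϑ⁻(Ḡ)·ϑ⁺(G) = n, where ϑ⁻ is the Schrijver theta and ϑ⁺ the Szegedy theta. -/

import Mathlib

open Matrix
open scoped ComplexOrder

/-- The Schrijver theta number ϑ⁻ of a graph. -/
noncomputable def thetaMinus {n : ℕ} (G : SimpleGraph (Fin n)) : ℝ :=
  sSup {r : ℝ | ∃ X : Matrix (Fin n) (Fin n) ℂ,
    X.PosSemidef ∧ (∀ i j, G.Adj i j → X i j = 0) ∧ (∀ i j, 0 ≤ X i j) ∧
    Matrix.trace X = 1 ∧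
    Matrix.trace ((Matrix.of fun _ _ => (1 : ℂ)) * X) = (r : ℂ)}

/-- The Szegedy theta number ϑ⁺ of a graph. -/
noncomputable def thetaPlus {n : ℕ} (G : SimpleGraph (Fin n)) : ℝ :=
  sSup {r : ℝ | ∃ X : Matrix (Fin n) (Fin n) ℂ,
    X.PosSemidef ∧ (∀ i j, G.Adj i j → X i j ≤ 0) ∧ Matrix.trace X = 1 ∧
    Matrix.trace ((Matrix.of fun _ _ => (1 : ℂ)) * X) = (r : ℂ)}

/-!
Write `A` for the adjacency matrix, `J` for the all-ones matrix, `d` for the degree and `t` for the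
least eigenvalue. If `M` is positive semidefinite with unit diagonal and constant row sum `s`, then
`M - (s / n) J` is again positive semidefinite, so pairing it with a feasible matrix gives a bound,
while `M / n` is a trace-one matrix of value `s`. Thus both theta numbers are determined by two such
matrices `Z` and `Y` with row sums `l` and `n / l`, where `Z ≥ 0` vanishes on the non-edges and `Y`
on the edges. Take `Z = I - A / t`, so `l = 1 - d / t`. The projection onto the `t`-eigenspace is a
polynomial in `A`; 1-walk regularity makes it constant on the diagonal and on the edges. Scaled to
unit diagonal it is a matrix `E` with row sum `0` and edge entries `t / d`, so the convex
combination `Y = J / l + (1 - 1 / l) E` vanishes on the edges.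
-/

open Polynomial
open scoped MatrixOrder

variable {V 𝕜 : Type*} [Fintype V] [RCLike 𝕜]

local notation "𝕁" => Matrix.of fun _ _ => 1

section TraceInequalities

lemma trace_mul_nonneg_of_posSemidef {X Y : Matrix V V 𝕜} (hX : X.PosSemidef)
    (hY : Y.PosSemidef) : 0 ≤ (X * Y).trace := by
  classical
  obtain ⟨B, rfl⟩ := CStarAlgebra.nonneg_iff_eq_star_mul_self.mp hX.nonneg
  rw [Matrix.mul_assoc, Matrix.trace_mul_comm]
  exact (hY.mul_mul_conjTranspose_same B).trace_nonneg

lemma trace_mul_le_trace {α : Type*} [NonAssocSemiring α] [PartialOrder α] [IsOrderedAddMonoid α]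
    {X Y : Matrix V V α} (hdiag : ∀ i, Y i i = 1) (hoff : ∀ i j, i ≠ j → X i j * Y j i ≤ 0) :
    (X * Y).trace ≤ X.trace := by
  classical
  have hentry (i j : V) : X i j * Y j i ≤ if i = j then X i i else 0 := by
    split_ifs with hij
    · rw [← hij, hdiag, mul_one]
    · exact hoff i j hij
  calc (X * Y).trace = ∑ i, ∑ j, X i j * Y j i := by
        simp only [Matrix.trace, Matrix.diag_apply, Matrix.mul_apply]
    _ ≤ ∑ i, ∑ j, if i = j then X i i else 0 :=
        Finset.sum_le_sum fun i _ => Finset.sum_le_sum fun j _ => hentry i j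
    _ = X.trace := by simp [Matrix.trace]

end TraceInequalities

section AllOnes

lemma posSemidef_allOnes {ι : Type*} [Finite ι] : (𝕁 : Matrix ι ι 𝕜).PosSemidef := by
  convert Matrix.posSemidef_vecMulVec_self_star (1 : ι → 𝕜) using 1
  ext i j
  simp [Matrix.vecMulVec_apply]

lemma allOnes_mul_allOnes :
    (𝕁 : Matrix V V 𝕜) * 𝕁 = (Fintype.card V : ℝ) • (𝕁 : Matrix V V 𝕜) := by
  ext i j
  simp [Matrix.mul_apply, RCLike.real_smul_eq_coe_mul]

lemma trace_allOnes {α : Type*} [AddCommMonoidWithOne α] :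
    (𝕁 : Matrix V V α).trace = Fintype.card V := by
  simp [Matrix.trace]

lemma allOnes_mul_of_mul_allOnes {M : Matrix V V 𝕜} {s : ℝ} (hM : M.IsHermitian)
    (h : M * 𝕁 = s • (𝕁 : Matrix V V 𝕜)) : 𝕁 * M = s • (𝕁 : Matrix V V 𝕜) := by
  simpa only [Matrix.conjTranspose_mul, Matrix.conjTranspose_smul, star_trivial, hM.eq,
    posSemidef_allOnes.isHermitian.eq] using congrArg Matrix.conjTranspose h

-- Compress `M` to the orthogonal complement of the all-ones vector.
lemma posSemidef_sub_smul_allOnes {M : Matrix V V 𝕜} {s : ℝ} (hM : M.PosSemidef)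
    (h : M * 𝕁 = s • (𝕁 : Matrix V V 𝕜)) :
    (M - (s / Fintype.card V) • (𝕁 : Matrix V V 𝕜)).PosSemidef := by
  classical
  have hJ : (𝕁 : Matrix V V 𝕜).IsHermitian := posSemidef_allOnes.isHermitian
  have hJM := allOnes_mul_of_mul_allOnes hM.isHermitian h
  have hcompress := hM.mul_mul_conjTranspose_same
    (1 - (Fintype.card V : ℝ)⁻¹ • (𝕁 : Matrix V V 𝕜))
  convert hcompress using 1
  simp only [Matrix.conjTranspose_sub, Matrix.conjTranspose_one, Matrix.conjTranspose_smul,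
    star_trivial, hJ.eq, Matrix.sub_mul, Matrix.mul_sub, Matrix.one_mul, Matrix.mul_one,
    Matrix.smul_mul, Matrix.mul_smul, h, hJM, allOnes_mul_allOnes]
  rcases eq_or_ne (Fintype.card V : ℝ) 0 with h0 | h0
  · simp [h0]
  · match_scalars
    · simp
    · field_simp
      ring

end AllOnes

/-- A correlation matrix (positive semidefinite with unit diagonal) all of whose row sums equal the
real number `s`. Such matrices are, up to scaling, the optimal solutions of the theta programs. -/
structure IsRegularCorrelation (M : Matrix V V 𝕜) (s : ℝ) : Prop where
  posSemidef : M.PosSemidef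
  diag_eq_one : ∀ i, M i i = 1
  mul_allOnes : M * 𝕁 = s • (𝕁 : Matrix V V 𝕜)

lemma isRegularCorrelation_one [DecidableEq V] :
    IsRegularCorrelation (1 : Matrix V V 𝕜) 1 where
  posSemidef := .one
  diag_eq_one := Matrix.one_apply_eq
  mul_allOnes := by rw [Matrix.one_mul, one_smul]

lemma isRegularCorrelation_allOnes :
    IsRegularCorrelation (𝕁 : Matrix V V 𝕜) (Fintype.card V) where
  posSemidef := posSemidef_allOnes
  diag_eq_one _ := rfl
  mul_allOnes := allOnes_mul_allOnes

namespace IsRegularCorrelation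

variable {M N X : Matrix V V 𝕜} {s t : ℝ}

lemma convexCombination (hM : IsRegularCorrelation M s) (hN : IsRegularCorrelation N t)
    {a b : ℝ} (ha : 0 ≤ a) (hb : 0 ≤ b) (hab : a + b = 1) :
    IsRegularCorrelation (a • M + b • N) (a * s + b * t) where
  posSemidef := (hM.posSemidef.smul ha).add (hN.posSemidef.smul hb)
  diag_eq_one i := by
    rw [Matrix.add_apply, Matrix.smul_apply, Matrix.smul_apply, hM.diag_eq_one, hN.diag_eq_one,
      ← add_smul, hab, one_smul]
  mul_allOnes := by
    rw [Matrix.add_mul, Matrix.smul_mul, Matrix.smul_mul, hM.mul_allOnes, hN.mul_allOnes,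
      smul_smul, smul_smul, ← add_smul]

lemma trace_eq_card (hM : IsRegularCorrelation M s) : M.trace = Fintype.card V := by
  simp [Matrix.trace, hM.diag_eq_one]

lemma trace_allOnes_mul (hM : IsRegularCorrelation M s) :
    (𝕁 * M).trace = s • (Fintype.card V : 𝕜) := by
  rw [Matrix.trace_mul_comm, hM.mul_allOnes, Matrix.trace_smul, trace_allOnes]

lemma div_card_smul_trace_allOnes_mul_le_trace (hM : IsRegularCorrelation M s) (hX : X.PosSemidef)
    (hoff : ∀ i j, i ≠ j → X i j * M j i ≤ 0) :
    (s / Fintype.card V : ℝ) • (𝕁 * X).trace ≤ X.trace := by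
  have h := trace_mul_nonneg_of_posSemidef hX (posSemidef_sub_smul_allOnes hM.posSemidef
    hM.mul_allOnes)
  rw [Matrix.mul_sub, Matrix.trace_sub, Matrix.mul_smul, Matrix.trace_smul,
    Matrix.trace_mul_comm X (Matrix.of _), sub_nonneg] at h
  exact h.trans (trace_mul_le_trace hM.diag_eq_one hoff)

lemma le_card_div_of_trace_eq_one [Nonempty V] {r : ℝ} (hM : IsRegularCorrelation M s)
    (hs : 0 < s) (hX : X.PosSemidef) (hoff : ∀ i j, i ≠ j → X i j * M j i ≤ 0)
    (hXtr : X.trace = 1) (hr : (𝕁 * X).trace = (r : 𝕜)) : r ≤ Fintype.card V / s := by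
  have h := hM.div_card_smul_trace_allOnes_mul_le_trace hX hoff
  rw [hr, hXtr, RCLike.real_smul_eq_coe_mul] at h
  have hsr : s / Fintype.card V * r ≤ 1 := by exact_mod_cast h
  rwa [div_mul_eq_mul_div, div_le_one (Nat.cast_pos.mpr Fintype.card_pos),
    ← le_div_iff₀' hs] at hsr

lemma trace_inv_card_smul_eq_one [Nonempty V] (hM : IsRegularCorrelation M s) :
    ((Fintype.card V : ℝ)⁻¹ • M).trace = 1 := by
  simp [Matrix.trace_smul, hM.trace_eq_card, RCLike.real_smul_eq_coe_mul]

lemma trace_allOnes_mul_inv_card_smul [Nonempty V] (hM : IsRegularCorrelation M s) :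
    (𝕁 * ((Fintype.card V : ℝ)⁻¹ • M)).trace = (s : 𝕜) := by
  rw [Matrix.mul_smul, Matrix.trace_smul, hM.trace_allOnes_mul, smul_comm,
    RCLike.real_smul_eq_coe_mul, RCLike.real_smul_eq_coe_mul]
  simp

end IsRegularCorrelation

section Spectral

variable [DecidableEq V] {A : Matrix V V 𝕜} {t : ℝ}

lemma posSemidef_sub_smul_one_of_mem_lowerBounds (hA : A.IsHermitian)
    (ht : t ∈ lowerBounds (spectrum ℝ A)) : (A - t • (1 : Matrix V V 𝕜)).PosSemidef := by
  rw [← Algebra.algebraMap_eq_smul_one, ← Matrix.le_iff,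
    algebraMap_le_iff_le_spectrum (ha := hA.isSelfAdjoint)]
  exact ht

lemma neg_of_mem_lowerBounds_spectrum (hA : A.IsHermitian) (hA0 : A ≠ 0) (htr : A.trace = 0)
    (ht : t ∈ lowerBounds (spectrum ℝ A)) : t < 0 := by
  by_contra! ht0
  have hpsd : A.PosSemidef := Matrix.nonneg_iff_posSemidef.mp <| by
    rw [StarOrderedRing.nonneg_iff_spectrum_nonneg (R := ℝ) A hA.isSelfAdjoint]
    exact fun x hx => ht0.trans (ht hx)
  exact hA0 (hpsd.trace_eq_zero_iff.mp htr)

-- `p` is the Lagrange polynomial of `t` on the spectrum, so `p(A)` is the spectral projection.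
lemma exists_posSemidef_aeval_mul_eq_smul (hA : A.IsHermitian) (ht : t ∈ spectrum ℝ A) :
    ∃ p : ℝ[X], (aeval A p).PosSemidef ∧ aeval A p ≠ 0 ∧ aeval A p * A = t • aeval A p := by
  have hfin : (spectrum ℝ A).Finite := A.finite_real_spectrum
  have hsa : IsSelfAdjoint A := hA.isSelfAdjoint
  let p : ℝ[X] := Lagrange.basis hfin.toFinset id t
  have ht' : t ∈ hfin.toFinset := hfin.mem_toFinset.mpr ht
  have hp_self : p.eval t = 1 := Lagrange.eval_basis_self Function.injective_id.injOn ht'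
  have hp_of_ne {x : ℝ} (hx : x ∈ spectrum ℝ A) (hxt : t ≠ x) : p.eval x = 0 :=
    Lagrange.eval_basis_of_ne (v := id) hxt (hfin.mem_toFinset.mpr hx)
  have hcfc (q : ℝ[X]) : cfc q.eval A = aeval A q := cfc_polynomial q A
  refine ⟨p, ?_, fun h0 => ?_, ?_⟩
  · rw [← Matrix.nonneg_iff_posSemidef, ← hcfc]
    refine cfc_nonneg fun x hx => ?_
    rcases eq_or_ne t x with rfl | hxt
    · exact hp_self.symm ▸ zero_le_one
    · exact (hp_of_ne hx hxt).ge
  · have : Nontrivial (Matrix V V 𝕜) := not_subsingleton_iff_nontrivial.mp fun _ =>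
      Set.notMem_empty t (spectrum.of_subsingleton (R := ℝ) A ▸ ht)
    have hmem := spectrum.subset_polynomial_aeval A p ⟨t, ht, rfl⟩
    simp [h0, hp_self] at hmem
  · suffices aeval A (p * X) = aeval A (C t * p) by
      simpa only [map_mul, aeval_X, aeval_C, ← Algebra.smul_def] using this
    rw [← hcfc, ← hcfc]
    refine cfc_congr fun x hx => ?_
    rcases eq_or_ne t x with rfl | hxt
    · simp [mul_comm]
    · simp [hp_of_ne hx hxt]

end Spectral

section WalkRegular

/-- Matrices constant on the diagonal and constant on the edges of `G`. A graph is 1-walk regular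
exactly when this submodule contains all powers of its adjacency matrix. -/
def diagEdgeConstant {ι : Type*} (R α : Type*) [Semiring R] [AddCommMonoid α] [Module R α]
    (G : SimpleGraph ι) : Submodule R (Matrix ι ι α) where
  carrier := {M | (∃ a, ∀ i, M i i = a) ∧ ∃ b, ∀ i j, G.Adj i j → M i j = b}
  add_mem' := by
    rintro M N ⟨⟨a, ha⟩, b, hb⟩ ⟨⟨c, hc⟩, d, hd⟩
    exact ⟨⟨a + c, fun i => congrArg₂ (· + ·) (ha i) (hc i)⟩,
      b + d, fun i j hij => congrArg₂ (· + ·) (hb i j hij) (hd i j hij)⟩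
  zero_mem' := ⟨⟨0, fun _ => rfl⟩, 0, fun _ _ _ => rfl⟩
  smul_mem' := by
    rintro r M ⟨⟨a, ha⟩, b, hb⟩
    exact ⟨⟨r • a, fun i => congrArg (r • ·) (ha i)⟩,
      r • b, fun i j hij => congrArg (r • ·) (hb i j hij)⟩

lemma aeval_mem_of_pow_mem {R A : Type*} [CommSemiring R] [Semiring A] [Algebra R A]
    {S : Submodule R A} {a : A} (h : ∀ k, a ^ k ∈ S) (p : R[X]) : aeval a p ∈ S := by
  rw [aeval_eq_sum_range]
  exact S.sum_mem fun k _ => S.smul_mem _ (h k)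

variable {G : SimpleGraph V} [DecidableRel G.Adj]

lemma pow_adjMatrix_mem_diagEdgeConstant [DecidableEq V] {R α : Type*} [Semiring R] [Semiring α]
    [Module R α]
    (hwalk : ∀ k : ℕ, 0 < k → ∃ a b : α,
      Matrix.hadamard (G.adjMatrix α ^ k) 1 = a • (1 : Matrix V V α) ∧
      Matrix.hadamard (G.adjMatrix α ^ k) (G.adjMatrix α) = b • G.adjMatrix α) (k : ℕ) :
    G.adjMatrix α ^ k ∈ diagEdgeConstant R α G := by
  rcases k.eq_zero_or_pos with rfl | hk
  · rw [pow_zero]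
    exact ⟨⟨1, Matrix.one_apply_eq⟩, 0, fun i j hij => Matrix.one_apply_ne hij.ne⟩
  · obtain ⟨a, b, ha, hb⟩ := hwalk k hk
    exact ⟨⟨a, fun i => by simpa using congrFun₂ ha i i⟩,
      b, fun i j hij => by simpa [hij] using congrFun₂ hb i j⟩

lemma exists_isRegularOfDegree_of_sq_mem [DecidableEq V] {R α : Type*} [Semiring R] [Semiring α]
    [CharZero α] [Module R α] (h : G.adjMatrix α ^ 2 ∈ diagEdgeConstant R α G) :
    ∃ d, G.IsRegularOfDegree d := by
  obtain ⟨a, ha⟩ := h.1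
  have hdeg (i : V) : (G.degree i : α) = a := by
    rw [← ha i, pow_two, SimpleGraph.adjMatrix_mul_self_apply_self]
  rcases isEmpty_or_nonempty V with hV | ⟨⟨v⟩⟩
  · exact ⟨0, hV.elim⟩
  · exact ⟨G.degree v, fun i => Nat.cast_injective ((hdeg i).trans (hdeg v).symm)⟩

variable {d : ℕ} {t : ℝ}

lemma adjMatrix_mul_allOnes (hG : G.IsRegularOfDegree d) :
    G.adjMatrix 𝕜 * 𝕁 = (d : ℝ) • (𝕁 : Matrix V V 𝕜) := by
  ext i j
  simp [hG.degree_eq i, RCLike.real_smul_eq_coe_mul]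

lemma mul_allOnes_eq_zero_of_mul_adjMatrix {E : Matrix V V 𝕜} (hG : G.IsRegularOfDegree d)
    (hEA : E * G.adjMatrix 𝕜 = t • E) (htd : t ≠ d) : E * 𝕁 = (0 : Matrix V V 𝕜) := by
  have h : (t - d : ℝ) • (E * 𝕁) = (0 : Matrix V V 𝕜) := by
    rw [sub_smul, ← Matrix.smul_mul, ← hEA, Matrix.mul_assoc, adjMatrix_mul_allOnes hG,
      Matrix.mul_smul, sub_self]
  exact (smul_eq_zero.mp h).resolve_left (sub_ne_zero.mpr htd)

lemma degree_mul_eq_of_mul_adjMatrix [Nonempty V] {E : Matrix V V 𝕜} {a b : 𝕜}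
    (hG : G.IsRegularOfDegree d) (hEA : E * G.adjMatrix 𝕜 = t • E) (ha : ∀ i, E i i = a)
    (hb : ∀ i j, G.Adj i j → E i j = b) : d * b = t * a := by
  obtain ⟨i⟩ := ‹Nonempty V›
  have h := congrFun₂ hEA i i
  rw [SimpleGraph.mul_adjMatrix_apply, Finset.sum_congr rfl fun j hj =>
    hb i j ((G.mem_neighborFinset i j).mp hj)] at h
  simpa [hG.degree_eq i, ha, RCLike.real_smul_eq_coe_mul] using h

-- `E` is the projection onto the `t`-eigenspace, scaled to have unit diagonal.
lemma exists_isRegularCorrelation_zero [DecidableEq V] (hG : G.IsRegularOfDegree d)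
    (hpow : ∀ k, G.adjMatrix 𝕜 ^ k ∈ diagEdgeConstant ℝ 𝕜 G)
    (ht : t ∈ spectrum ℝ (G.adjMatrix 𝕜)) (htd : t ≠ d) :
    ∃ E : Matrix V V 𝕜, IsRegularCorrelation E 0 ∧
      ∀ i j, G.Adj i j → (d : 𝕜) * E i j = t := by
  obtain ⟨p, hE, hE0, hEA⟩ :=
    exists_posSemidef_aeval_mul_eq_smul (G.isHermitian_adjMatrix 𝕜) ht
  obtain ⟨⟨a, ha⟩, b, hb⟩ := aeval_mem_of_pow_mem hpow p
  set E := aeval (G.adjMatrix 𝕜) p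
  obtain ⟨i, -⟩ : ∃ i, ∃ j, E i j ≠ 0 := by
    contrapose! hE0
    exact Matrix.ext hE0
  have : Nonempty V := ⟨i⟩
  have ha0 : a ≠ 0 := by
    rintro rfl
    exact hE0 (hE.trace_eq_zero_iff.mp (Finset.sum_eq_zero fun j _ => ha j))
  refine ⟨a⁻¹ • E, ⟨hE.smul (inv_nonneg.mpr (ha i ▸ hE.diag_nonneg)), fun j => ?_, ?_⟩,
    fun j k hjk => ?_⟩
  · rw [Matrix.smul_apply, ha, smul_eq_mul, inv_mul_cancel₀ ha0]
  · rw [Matrix.smul_mul, mul_allOnes_eq_zero_of_mul_adjMatrix hG hEA htd, smul_zero, zero_smul]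
  · rw [Matrix.smul_apply, hb j k hjk, smul_eq_mul, mul_left_comm,
      degree_mul_eq_of_mul_adjMatrix hG hEA ha hb, mul_left_comm, inv_mul_cancel₀ ha0, mul_one]

lemma isRegularCorrelation_one_sub_smul_adjMatrix [DecidableEq V] (hG : G.IsRegularOfDegree d)
    (ht : t ∈ lowerBounds (spectrum ℝ (G.adjMatrix 𝕜))) (ht0 : t < 0) :
    IsRegularCorrelation (1 - t⁻¹ • G.adjMatrix 𝕜) (1 - d / t) where
  posSemidef := by
    have h := (posSemidef_sub_smul_one_of_mem_lowerBounds (G.isHermitian_adjMatrix 𝕜) ht).smul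
      (neg_nonneg.mpr (inv_nonpos.mpr ht0.le))
    convert h using 1
    rw [smul_sub, smul_smul, neg_mul, inv_mul_cancel₀ ht0.ne]
    module
  diag_eq_one i := by simp
  mul_allOnes := by
    rw [Matrix.sub_mul, Matrix.one_mul, Matrix.smul_mul, adjMatrix_mul_allOnes hG, smul_smul,
      sub_smul, one_smul, div_eq_inv_mul]

end WalkRegular

/-- A pair of matrices certifying `ϑ⁻(Gᶜ) = l` and `ϑ⁺(G) = |V| / l`: up to scaling, `Z` is optimal
for the first program and bounds the second, while `Y` is optimal for the second and bounds the
first. -/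
structure IsThetaCertificate (G : SimpleGraph V) (Z Y : Matrix V V 𝕜) (l : ℝ) : Prop where
  pos : 0 < l
  left : IsRegularCorrelation Z l
  left_nonneg : ∀ i j, 0 ≤ Z i j
  left_eq_zero_of_compl_adj : ∀ i j, Gᶜ.Adj i j → Z i j = 0
  right : IsRegularCorrelation Y (Fintype.card V / l)
  right_eq_zero_of_adj : ∀ i j, G.Adj i j → Y i j = 0

section Existence

variable (𝕜) {G : SimpleGraph V}

lemma isThetaCertificate_bot [DecidableEq V] :
    IsThetaCertificate ⊥ (1 : Matrix V V 𝕜) 𝕁 1 where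
  pos := one_pos
  left := isRegularCorrelation_one
  left_nonneg i j := by rw [Matrix.one_apply]; split_ifs <;> simp
  left_eq_zero_of_compl_adj _ _ h := Matrix.one_apply_ne h.ne
  right := by simpa only [div_one] using isRegularCorrelation_allOnes
  right_eq_zero_of_adj _ _ h := h.elim

variable {𝕜}

lemma isThetaCertificate_of_mem_lowerBounds [DecidableEq V] [DecidableRel G.Adj]
    {d : ℕ} {t l : ℝ} {E : Matrix V V 𝕜} (hG : G.IsRegularOfDegree d)
    (ht : t ∈ lowerBounds (spectrum ℝ (G.adjMatrix 𝕜))) (ht0 : t < 0) (hl : l = 1 - d / t)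
    (hE : IsRegularCorrelation E 0) (hEadj : ∀ i j, G.Adj i j → (d : 𝕜) * E i j = t) :
    IsThetaCertificate G (1 - t⁻¹ • G.adjMatrix 𝕜) (l⁻¹ • 𝕁 + (1 - l⁻¹) • E) l := by
  have hl1 : 1 ≤ l := by
    linarith [div_nonpos_of_nonneg_of_nonpos (Nat.cast_nonneg (α := ℝ) d) ht0.le]
  have hl0 : 0 < l := one_pos.trans_le hl1
  refine ⟨hl0, hl ▸ isRegularCorrelation_one_sub_smul_adjMatrix hG ht ht0, fun i j => ?_,
    fun i j hij => ?_, ?_, fun i j hij => ?_⟩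
  · rw [sub_eq_add_neg, ← neg_smul, Matrix.add_apply, Matrix.smul_apply, Matrix.one_apply,
      SimpleGraph.adjMatrix_apply]
    refine add_nonneg ?_ (smul_nonneg (neg_nonneg.mpr (inv_nonpos.mpr ht0.le)) ?_) <;>
      split_ifs <;> simp
  · rw [SimpleGraph.compl_adj] at hij
    simp [hij.1, hij.2]
  · simpa [div_eq_inv_mul] using isRegularCorrelation_allOnes.convexCombination hE
      (inv_nonneg.mpr hl0.le) (sub_nonneg.mpr (inv_le_one_of_one_le₀ hl1)) (add_sub_cancel _ _)
  · have hEij : (l - 1) • E i j = -1 := by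
      rw [hl, RCLike.real_smul_eq_coe_mul]
      have ht𝕜 : (t : 𝕜) ≠ 0 := RCLike.ofReal_ne_zero.mpr ht0.ne
      push_cast
      linear_combination (-(t : 𝕜)⁻¹) * hEadj i j hij - inv_mul_cancel₀ ht𝕜
    calc l⁻¹ • (1 : 𝕜) + (1 - l⁻¹) • E i j
        = l⁻¹ • (1 + (l - 1) • E i j) := by
          rw [smul_add, smul_smul, mul_sub, inv_mul_cancel₀ hl0.ne', mul_one]
      _ = 0 := by rw [hEij, add_neg_cancel, smul_zero]

lemma exists_isThetaCertificate [DecidableEq V] [Nonempty V] [DecidableRel G.Adj]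
    (hpow : ∀ k, G.adjMatrix 𝕜 ^ k ∈ diagEdgeConstant ℝ 𝕜 G) :
    ∃ (Z Y : Matrix V V 𝕜) (l : ℝ), IsThetaCertificate G Z Y l := by
  rcases eq_or_ne G ⊥ with rfl | hne
  · exact ⟨_, _, _, isThetaCertificate_bot 𝕜⟩
  obtain ⟨u, v, huv⟩ := G.ne_bot_iff_exists_adj.mp hne
  obtain ⟨d, hG⟩ := exists_isRegularOfDegree_of_sq_mem (hpow 2)
  have hA := G.isHermitian_adjMatrix 𝕜
  obtain ⟨t, ht⟩ : ∃ t, IsLeast (spectrum ℝ (G.adjMatrix 𝕜)) t :=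
    Set.exists_min_image _ id (G.adjMatrix 𝕜).finite_real_spectrum
      (ContinuousFunctionalCalculus.spectrum_nonempty _ hA.isSelfAdjoint)
  have hA0 : G.adjMatrix 𝕜 ≠ 0 := fun h => by simpa [huv] using congrFun₂ h u v
  have ht0 : t < 0 := neg_of_mem_lowerBounds_spectrum hA hA0 (G.trace_adjMatrix 𝕜) ht.2
  obtain ⟨E, hE, hEadj⟩ :=
    exists_isRegularCorrelation_zero hG hpow ht.1 (ht0.trans_le d.cast_nonneg).ne
  exact ⟨_, _, _, isThetaCertificate_of_mem_lowerBounds hG ht.2 ht0 rfl hE hEadj⟩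

end Existence

lemma thetaPlus_fin_zero (G : SimpleGraph (Fin 0)) : thetaPlus G = 0 := by
  simp [thetaPlus]

namespace IsThetaCertificate

variable {n : ℕ} [NeZero n] {G : SimpleGraph (Fin n)} {Z Y : Matrix (Fin n) (Fin n) ℂ} {l : ℝ}

lemma thetaMinus_compl_eq (h : IsThetaCertificate G Z Y l) : thetaMinus Gᶜ = l := by
  have hcard : (0 : ℝ) < Fintype.card (Fin n) := Nat.cast_pos.mpr Fintype.card_pos
  refine IsGreatest.csSup_eq ⟨⟨(Fintype.card (Fin n) : ℝ)⁻¹ • Z,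
    h.left.posSemidef.smul (inv_nonneg.mpr hcard.le), fun i j hij => ?_,
    fun i j => smul_nonneg (inv_nonneg.mpr hcard.le) (h.left_nonneg i j),
    h.left.trace_inv_card_smul_eq_one, h.left.trace_allOnes_mul_inv_card_smul⟩, ?_⟩
  · rw [Matrix.smul_apply, h.left_eq_zero_of_compl_adj i j hij, smul_zero]
  · rintro r ⟨X, hX, hX0, -, hXtr, hr⟩
    have hoff (i j : Fin n) (hij : i ≠ j) : X i j * Y j i ≤ 0 := by
      by_cases hadj : G.Adj i j
      · rw [h.right_eq_zero_of_adj j i hadj.symm, mul_zero]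
      · rw [hX0 i j ((G.compl_adj i j).mpr ⟨hij, hadj⟩), zero_mul]
    simpa only [div_div_cancel₀ hcard.ne'] using
      h.right.le_card_div_of_trace_eq_one (div_pos hcard h.pos) hX hoff hXtr hr

lemma thetaPlus_eq (h : IsThetaCertificate G Z Y l) : thetaPlus G = n / l := by
  have hinv : (0 : ℝ) ≤ (Fintype.card (Fin n) : ℝ)⁻¹ := inv_nonneg.mpr (Nat.cast_nonneg _)
  suffices thetaPlus G = Fintype.card (Fin n) / l by rwa [Fintype.card_fin] at this
  refine IsGreatest.csSup_eq ⟨⟨(Fintype.card (Fin n) : ℝ)⁻¹ • Y,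
    h.right.posSemidef.smul hinv, fun i j hij => ?_,
    h.right.trace_inv_card_smul_eq_one, h.right.trace_allOnes_mul_inv_card_smul⟩, ?_⟩
  · rw [Matrix.smul_apply, h.right_eq_zero_of_adj i j hij, smul_zero]
  · rintro r ⟨X, hX, hXadj, hXtr, hr⟩
    have hoff (i j : Fin n) (hij : i ≠ j) : X i j * Z j i ≤ 0 := by
      by_cases hadj : G.Adj i j
      · exact mul_nonpos_of_nonpos_of_nonneg (hXadj i j hadj) (h.left_nonneg j i)
      · rw [h.left_eq_zero_of_compl_adj j i ((G.compl_adj j i).mpr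
          ⟨hij.symm, fun hji => hadj hji.symm⟩), mul_zero]
    exact h.left.le_card_div_of_trace_eq_one h.pos hX hoff hXtr hr

end IsThetaCertificate

/-- If G is 1-walk regular on n vertices, then ϑ⁻(Ḡ)·ϑ⁺(G) = n. -/
theorem thetaMinus_compl_mul_thetaPlus_eq {n : ℕ}
    (G : SimpleGraph (Fin n)) [DecidableRel G.Adj]
    (hwalk : ∀ k : ℕ, 0 < k → ∃ a b : ℂ,
      Matrix.hadamard ((G.adjMatrix ℂ) ^ k) 1 = a • (1 : Matrix (Fin n) (Fin n) ℂ) ∧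
      Matrix.hadamard ((G.adjMatrix ℂ) ^ k) (G.adjMatrix ℂ) = b • G.adjMatrix ℂ) :
    thetaMinus Gᶜ * thetaPlus G = (n : ℝ) := by
  rcases n.eq_zero_or_pos with rfl | hn
  · rw [thetaPlus_fin_zero, mul_zero, Nat.cast_zero]
  have : NeZero n := ⟨hn.ne'⟩
  obtain ⟨Z, Y, l, h⟩ := exists_isThetaCertificate (pow_adjMatrix_mem_diagEdgeConstant hwalk)
  rw [h.thetaMinus_compl_eq, h.thetaPlus_eq, mul_div_cancel₀ _ h.pos.ne']
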